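/- Let 𝔽 be a field, d ≥ 1 an integer, and V a (d+1)-dimensional vector space over 𝔽. Let {E*_i}_{i=0}^{d} be a system of mutually orthogonal idempotents in End(V); let A ∈ End(V) satisfy E*_i A E*_j = 0 if |i−j| > 1 and E*_i A E*_j ≠ 0 if |i−j| = 1 (0 ≤ i,j ≤ d); let θ*_0,…,θ*_d ∈ 𝔽 and A* = Σ_{i=0}^{d} θ*_iE*_i; let θ_0,…,θ_d ∈ 𝔽 be mutually distinct; suppose θ*_i ≠ θ*_0 for 1 ≤ i ≤ d; suppose there exist β, γ* ∈ 𝔽 with γ* = θ*_{i−1} − βθ*_i + θ*_{i+1} for 1 ≤ i ≤ d−1, extended by θ*_{−1}, θ*_{d+1} so this also holds at i = 0 and i = d; suppose there exist nonzero v_0, v_1 ∈ V with Av_0 = θ_0v_0, Av_1 = θ_1v_1, and A*v_0 − v_1 ∈ 𝔽v_0; suppose there exist γ, ω, η* ∈ 𝔽 with a_i(θ*_i − θ*_{i−1})(θ*_i − θ*_{i+1}) = γθ*_i² + ωθ*_i + η* for 0 ≤ i ≤ d, where a_i = tr(E*_iA); and suppose θ_{i−1} − βθ_i + θ_{i+1}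 = γ for 1 ≤ i ≤ d−1. Then for 1 ≤ i ≤ d there exists a nonzero vector v_i ∈ V such that Av_i = θ_iv_i and A*v_{i−1} − v_i ∈ span(v_0, …, v_{i−1}). -/

import Mathlib

namespace LeonardPaper

variable {F : Type*} [Field F] {V : Type*} [AddCommGroup V] [Module F V]

/-- A system of mutually orthogonal (rank-one) idempotents in `End(V)`. -/
def MOISys (d : ℕ) (E : Fin (d + 1) → Module.End F V) : Prop :=
  (∀ i j, E i * E j = if i = j then E i else 0) ∧
  ∀ i, Module.finrank F (LinearMap.range (E i)) = 1

/-!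
On the block `E i * X * E j`, the left side of the Askey–Wilson relation for `A` and
`B = ∑ i, θs i • E i` is multiplication by `(θs j - θs (i - 1)) * (θs j - θs (i + 1))`. This factor
kills the off-diagonal blocks of a tridiagonal `A`, and on the diagonal it produces the quadratic
`γ θs i ^ 2 + ω θs i + ηs`, so the relation holds. Evaluated at `v n`, the relation says that
`B (v (n + 1))` is a `θ (n + 2)`-eigenvector of `A` modulo the span of `v 0, …, v (n + 1)`; since
`A - θ (n + 2)` maps that span onto itself, `B (v (n + 1))` can be corrected by an element of the
span to a true eigenvector `v (n + 2)`. If some `v (i + 1)` were zero, the span of `v 0, …, v i`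
would be invariant under `A` and `B`; but an invariant subspace containing an eigenvector of `A`
contains the range of `E 0`, and tridiagonality then makes it all of `V`.
-/

section RankOne

theorem range_le_of_apply_mem {V' : Type*} [AddCommGroup V'] [Module F V'] {T : V →ₗ[F] V'}
    (hT : Module.finrank F (LinearMap.range T) = 1) {W : Submodule F V'} {x : V}
    (hx : T x ≠ 0) (hxW : T x ∈ W) : LinearMap.range T ≤ W :=
  (Submodule.isAtom_iff_finrank_eq_one.2 hT).not_disjoint_iff_le.1 fun hdisj =>
    hx (Submodule.disjoint_def.1 hdisj _ ⟨x, rfl⟩ hxW)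

theorem exists_eq_smulRight_of_finrank_range_eq_one {V' : Type*} [AddCommGroup V'] [Module F V']
    {T : V →ₗ[F] V'} (hT : Module.finrank F (LinearMap.range T) = 1) :
    ∃ (φ : Module.Dual F V) (u : V'), T = φ.smulRight u := by
  let b := Module.basisUnique Unit hT
  refine ⟨b.coord () ∘ₗ T.rangeRestrict, b (), LinearMap.ext fun x => ?_⟩
  have hx := congrArg Subtype.val (b.sum_repr (T.rangeRestrict x))
  simpa using hx.symm

theorem mul_mul_self_eq_trace_smul [FiniteDimensional F V] {T : Module.End F V}
    (hT : Module.finrank F (LinearMap.range T) = 1) (X : Module.End F V) :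
    T * X * T = LinearMap.trace F V (T * X) • T := by
  obtain ⟨φ, u, rfl⟩ := exists_eq_smulRight_of_finrank_range_eq_one hT
  have htrace : LinearMap.trace F V (φ.smulRight u * X) = φ (X u) :=
    LinearMap.trace_smulRight (φ ∘ₗ X) u
  ext x
  simp [htrace, smul_smul, mul_comm]

end RankOne

section Idempotents

variable {ι : Type*} [Fintype ι]

theorem eq_of_forall_mul_mul_eq {R : Type*} [Semiring R] {E : ι → R} (hE : ∑ i, E i = 1)
    {X Y : R} (h : ∀ i j, E i * X * E j = E i * Y * E j) : X = Y := by
  have expand (Z : R) : Z = ∑ i, ∑ j, E i * Z * E j := by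
    simp only [← Finset.mul_sum, ← Finset.sum_mul, hE, one_mul, mul_one]
  rw [expand X, expand Y]
  simp only [h]

section Algebra

variable {K R : Type*} [CommSemiring K] [Semiring R] [Algebra K R] {E : ι → R}

theorem sum_smul_mul_of_orthogonal (hE : OrthogonalIdempotents E) (θ : ι → K) (j : ι) :
    (∑ i, θ i • E i) * E j = θ j • E j := by
  classical
  simp [Finset.sum_mul, hE.mul_eq]

theorem mul_sum_smul_of_orthogonal (hE : OrthogonalIdempotents E) (θ : ι → K) (j : ι) :
    E j * ∑ i, θ i • E i = θ j • E j := by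
  classical
  simp [Finset.mul_sum, hE.mul_eq]

end Algebra

variable {E : ι → Module.End F V}

theorem completeOrthogonalIdempotents_of_card_eq_finrank [FiniteDimensional F V]
    (hE : OrthogonalIdempotents E) (hne : ∀ i, E i ≠ 0)
    (hcard : Fintype.card ι = Module.finrank F V) : CompleteOrthogonalIdempotents E := by
  classical
  have hEE (i j : ι) (x : V) : E i (E j x) = if i = j then E i x else 0 := by
    rw [← Module.End.mul_apply, hE.mul_eq]
    split_ifs <;> rfl
  choose x hx using fun i => DFunLike.ne_iff.1 (hne i)
  have hli : LinearIndependent F fun i => E i (x i) := by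
    rw [Fintype.linearIndependent_iff]
    intro g hg i
    have hi : g i • E i (x i) = 0 := by simpa [hEE] using congrArg (E i) hg
    exact (smul_eq_zero.1 hi).resolve_right (hx i)
  refine ⟨hE, LinearMap.ext_on_range (hli.span_eq_top_of_card_eq_finrank' hcard) fun i => ?_⟩
  simp [hEE]

theorem MOISys.completeOrthogonalIdempotents {d : ℕ} {E : Fin (d + 1) → Module.End F V}
    (hE : MOISys d E) (hdim : Module.finrank F V = d + 1) : CompleteOrthogonalIdempotents E := by
  have : FiniteDimensional F V := .of_finrank_eq_succ hdim
  refine completeOrthogonalIdempotents_of_card_eq_finrank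
    (OrthogonalIdempotents.iff_mul_eq.2 hE.1) (fun i hi => ?_) (by simp [hdim])
  have hrank := hE.2 i
  rw [hi, LinearMap.range_zero, finrank_bot] at hrank
  exact zero_ne_one hrank

theorem sum_apply_of_complete (hE : CompleteOrthogonalIdempotents E) (x : V) :
    ∑ i, E i x = x := by
  rw [← LinearMap.sum_apply, hE.complete, Module.End.one_apply]

theorem mem_invtSubmodule_of_sum_smul (hE : CompleteOrthogonalIdempotents E) {θ : ι → F} {i₀ : ι}
    (hθ : ∀ i, i ≠ i₀ → θ i ≠ θ i₀) {W : Submodule F V}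
    (hW : W ∈ (∑ i, θ i • E i).invtSubmodule) : W ∈ (E i₀).invtSubmodule := by
  classical
  intro x hx
  -- `p` vanishes at every `θ i` except `θ i₀`, so `p` of the sum is a nonzero multiple of `E i₀`.
  let p : Polynomial F := ∏ i ∈ Finset.univ.erase i₀, (.X - .C (θ i))
  have heig (i : ι) : (∑ j, θ j • E j) (E i x) = θ i • E i x :=
    LinearMap.congr_fun (sum_smul_mul_of_orthogonal hE.toOrthogonalIdempotents θ i) x
  have hp_other (i : ι) (hi : i ≠ i₀) : p.eval (θ i) = 0 := by
    rw [Polynomial.eval_prod]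
    exact Finset.prod_eq_zero (Finset.mem_erase.2 ⟨hi, Finset.mem_univ i⟩) (by simp)
  have hp_self : p.eval (θ i₀) ≠ 0 := by
    rw [Polynomial.eval_prod, Finset.prod_ne_zero_iff]
    intro i hi
    simpa [sub_eq_zero] using (hθ i (Finset.ne_of_mem_erase hi)).symm
  have hpx : Polynomial.aeval (∑ j, θ j • E j) p x = p.eval (θ i₀) • E i₀ x := by
    conv_lhs => rw [← sum_apply_of_complete hE x, map_sum]
    rw [Finset.sum_eq_single i₀ _ (by simp)]
    · exact Module.End.aeval_apply_of_mem_apply_eq_smul (heig i₀)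
    · intro i _ hi
      rw [Module.End.aeval_apply_of_mem_apply_eq_smul (heig i), hp_other i hi, zero_smul]
  exact (W.smul_mem_iff hp_self).1
    (hpx ▸ Polynomial.aeval_apply_smul_mem_of_le_comap hx p _ hW)

end Idempotents

section Tridiagonal

variable {d : ℕ} {E : Fin (d + 1) → Module.End F V} {A : Module.End F V}

theorem apply_zero_ne_zero_of_eigenvector (hE : CompleteOrthogonalIdempotents E)
    (hrank : ∀ i, Module.finrank F (LinearMap.range (E i)) = 1)
    (hfar : ∀ i j : Fin (d + 1), (i : ℕ) + 1 < j → E i * A * E j = 0)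
    (hnear : ∀ i j : Fin (d + 1), (i : ℕ) + 1 = j → E i * A * E j ≠ 0)
    {v : V} (hv : v ≠ 0) {t : F} (hAv : A v = t • v) : E 0 v ≠ 0 := by
  intro h0
  suffices hzero : ∀ k, E k v = 0 from
    hv (by rw [← sum_apply_of_complete hE v, Finset.sum_eq_zero fun k _ => hzero k])
  intro k
  induction k using WellFoundedLT.induction with
  | ind k ih =>
    cases k using Fin.cases with
    | zero => exact h0
    | succ k =>
      have hsum : E k.castSucc (A v) = E k.castSucc (A (E k.succ v)) := by
        conv_lhs => rw [← sum_apply_of_complete hE v, map_sum, map_sum]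
        refine Finset.sum_eq_single _ (fun j _ hj => ?_) (by simp)
        rcases lt_or_gt_of_ne hj with hlt | hgt
        · rw [ih j hlt, map_zero, map_zero]
        · exact LinearMap.congr_fun (hfar k.castSucc j (by simpa [Fin.lt_def] using hgt)) v
      have hker : (E k.castSucc * A) (E k.succ v) = 0 := by
        rw [Module.End.mul_apply, ← hsum, hAv, map_smul, ih _ Fin.castSucc_lt_succ, smul_zero]
      by_contra hne
      have hrange := range_le_of_apply_mem (hrank k.succ) hne (LinearMap.mem_ker.2 hker)
      exact hnear k.castSucc k.succ (by simp) (LinearMap.range_le_ker_iff.1 hrange)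

theorem eq_top_of_range_zero_le (hE : CompleteOrthogonalIdempotents E)
    (hrank : ∀ i, Module.finrank F (LinearMap.range (E i)) = 1)
    (hfar : ∀ i j : Fin (d + 1), (j : ℕ) + 1 < i → E i * A * E j = 0)
    (hnear : ∀ i j : Fin (d + 1), (j : ℕ) + 1 = i → E i * A * E j ≠ 0)
    {W : Submodule F V} (hWA : W ∈ A.invtSubmodule) (h0 : LinearMap.range (E 0) ≤ W) :
    W = ⊤ := by
  suffices hall : ∀ k, LinearMap.range (E k) ≤ W by
    refine eq_top_iff.2 fun x _ => ?_
    rw [← sum_apply_of_complete hE x]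
    exact W.sum_mem fun k _ => hall k ⟨x, rfl⟩
  intro k
  induction k using WellFoundedLT.induction with
  | ind k ih =>
    cases k using Fin.cases with
    | zero => exact h0
    | succ k =>
      obtain ⟨x, hx⟩ := DFunLike.ne_iff.1 (hnear k.succ k.castSucc (by simp))
      refine range_le_of_apply_mem (hrank k.succ) hx ?_
      have hmem : ∑ j, E j (A (E k.castSucc x)) ∈ W := by
        rw [sum_apply_of_complete hE]
        exact hWA (ih _ Fin.castSucc_lt_succ ⟨x, rfl⟩)
      rw [← Finset.add_sum_erase _ _ (Finset.mem_univ k.succ)] at hmem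
      refine (W.add_mem_iff_left (W.sum_mem fun j hj => ?_)).1 hmem
      rcases lt_or_gt_of_ne (Finset.ne_of_mem_erase hj) with hlt | hgt
      · exact ih j hlt ⟨_, rfl⟩
      · have hzero := hfar j k.castSucc (by simpa [Fin.lt_def] using hgt)
        exact (LinearMap.congr_fun hzero x).symm ▸ W.zero_mem

theorem eq_top_of_invariant_of_eigenvector_mem (hE : CompleteOrthogonalIdempotents E)
    (hrank : ∀ i, Module.finrank F (LinearMap.range (E i)) = 1)
    (hfar : ∀ i j : Fin (d + 1), ((i : ℕ) + 1 < (j : ℕ) ∨ (j : ℕ) + 1 < (i : ℕ)) →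
      E i * A * E j = 0)
    (hnear : ∀ i j : Fin (d + 1), ((i : ℕ) + 1 = (j : ℕ) ∨ (j : ℕ) + 1 = (i : ℕ)) →
      E i * A * E j ≠ 0)
    {θ : Fin (d + 1) → F} (hθ : ∀ i, i ≠ 0 → θ i ≠ θ 0)
    {v : V} (hv : v ≠ 0) {t : F} (hAv : A v = t • v)
    {W : Submodule F V} (hvW : v ∈ W) (hWA : W ∈ A.invtSubmodule)
    (hWB : W ∈ (∑ i, θ i • E i).invtSubmodule) : W = ⊤ :=
  have hE0v : E 0 v ≠ 0 := apply_zero_ne_zero_of_eigenvector hE hrank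
    (fun i j h => hfar i j (.inl h)) (fun i j h => hnear i j (.inl h)) hv hAv
  eq_top_of_range_zero_le hE hrank
    (fun i j h => hfar i j (.inr h)) (fun i j h => hnear i j (.inr h)) hWA
    (range_le_of_apply_mem (hrank 0) hE0v (mem_invtSubmodule_of_sum_smul hE hθ hWB hvW))

end Tridiagonal

section AskeyWilson

variable {K R : Type*} [CommRing K] [Ring R] [Algebra K R]

/-- The Askey–Wilson relation between `A` and `B`, of degree one in `A` and two in `B`. In the
paper's notation `B` is `A*`, while `γs` and `ηs` are `γ*` and `η*`. -/
def AskeyWilsonRel (A B : R) (β γs ρ γ ω ηs : K) : Prop :=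
  B * B * A - β • (B * A * B) + A * B * B - γs • (B * A + A * B) - ρ • A
    = γ • (B * B) + ω • B + ηs • 1

theorem exists_eq_mul_of_recurrence {d : ℤ} {θs : ℤ → K} {β γs : K}
    (hrec : ∀ i : ℤ, 0 ≤ i → i ≤ d → γs = θs (i - 1) - β * θs i + θs (i + 1)) :
    ∃ ρ : K, ∀ i : ℤ, 0 ≤ i → i ≤ d → ∀ y : K,
      θs i ^ 2 - β * (θs i * y) + y ^ 2 - γs * (θs i + y) - ρ
        = (y - θs (i - 1)) * (y - θs (i + 1)) := by
  obtain ⟨ρ, hρ⟩ : ∃ ρ, θs 0 ^ 2 - γs * θs 0 - θs (0 - 1) * θs (0 + 1) = ρ := ⟨_, rfl⟩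
  have hconst (i : ℤ) (hi : 0 ≤ i) :
      i ≤ d → θs i ^ 2 - γs * θs i - θs (i - 1) * θs (i + 1) = ρ := by
    induction i, hi using Int.leInduction with
    | base => exact fun _ => hρ
    | succ i hi ih =>
      intro hid
      have hi_rec := hrec i hi (by lia)
      have hi_rec_succ := hrec (i + 1) (by lia) hid
      rw [add_sub_cancel_right] at hi_rec_succ ⊢
      linear_combination ih (by lia) + θs i * hi_rec_succ - θs (i + 1) * hi_rec
  exact ⟨ρ, fun i hi hid y => by linear_combination hconst i hi hid - y * hrec i hi hid⟩

theorem exists_askeyWilsonRel_of_tridiagonal {d : ℕ} {E : Fin (d + 1) → R}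
    (hE : CompleteOrthogonalIdempotents E) {A : R}
    (hfar : ∀ i j : Fin (d + 1), ((i : ℕ) + 1 < (j : ℕ) ∨ (j : ℕ) + 1 < (i : ℕ)) →
      E i * A * E j = 0)
    {a : ℕ → K} (hdiag : ∀ i : Fin (d + 1), E i * A * E i = a i • E i)
    {θs : ℤ → K} {β γs : K}
    (hrec : ∀ i : ℤ, 0 ≤ i → i ≤ d → γs = θs (i - 1) - β * θs i + θs (i + 1))
    {γ ω ηs : K}
    (ha : ∀ i : ℕ, i ≤ d →
      a i * ((θs i - θs ((i : ℤ) - 1)) * (θs i - θs ((i : ℤ) + 1)))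
        = γ * θs i ^ 2 + ω * θs i + ηs) :
    ∃ ρ : K, AskeyWilsonRel A (∑ i : Fin (d + 1), θs ((i : ℕ) : ℤ) • E i) β γs ρ γ ω ηs := by
  obtain ⟨ρ, hρ⟩ := exists_eq_mul_of_recurrence hrec
  refine ⟨ρ, eq_of_forall_mul_mul_eq hE.complete fun i j => ?_⟩
  set B := ∑ i : Fin (d + 1), θs ((i : ℕ) : ℤ) • E i
  have hEB (X : R) : E i * (B * X) = θs (i : ℕ) • (E i * X) := by
    rw [← mul_assoc, mul_sum_smul_of_orthogonal hE.toOrthogonalIdempotents, smul_mul_assoc]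
  have hBE : B * E j = θs (j : ℕ) • E j := sum_smul_mul_of_orthogonal hE.toOrthogonalIdempotents _ j
  have hlhs : E i * (B * B * A - β • (B * A * B) + A * B * B - γs • (B * A + A * B) - ρ • A) * E j
      = ((θs (j : ℕ) - θs ((i : ℕ) - 1)) * (θs (j : ℕ) - θs ((i : ℕ) + 1))) • (E i * A * E j) := by
    rw [← hρ (i : ℕ) (by omega) (by omega) (θs (j : ℕ))]
    simp only [mul_add, add_mul, mul_sub, sub_mul, smul_mul_assoc, mul_smul_comm, mul_assoc,
      hEB, hBE]
    module
  have hrhs : E i * (γ • (B * B) + ω • B + ηs • 1) * E j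
      = (γ * θs (j : ℕ) ^ 2 + ω * θs (j : ℕ) + ηs) • (E i * E j) := by
    simp only [mul_add, add_mul, smul_mul_assoc, mul_smul_comm, mul_assoc, hBE, one_mul]
    module
  rw [hlhs, hrhs]
  rcases eq_or_ne i j with rfl | hij
  · rw [hdiag, (hE.idem i).eq, smul_smul, mul_comm, ha i (by lia)]
  · rw [hE.ortho hij, smul_zero]
    rcases lt_trichotomy ((i : ℕ) + 1) j with hlt | heq | hgt
    · rw [hfar i j (.inl hlt), smul_zero]
    · simp [← heq]
    · rcases (show (j : ℕ) + 1 ≤ i by lia).eq_or_lt with heq | hlt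
      · simp [← heq]
      · rw [hfar i j (.inr hlt), smul_zero]

end AskeyWilson

section Chain

theorem span_le_map_sub_algebraMap {A : Module.End F V} {S : Set V} {μ : F}
    (hS : ∀ x ∈ S, ∃ t ≠ μ, A x = t • x) :
    Submodule.span F S ≤ (Submodule.span F S).map (A - algebraMap F _ μ) := by
  refine Submodule.span_le.2 fun x hx => ?_
  obtain ⟨t, ht, hAx⟩ := hS x hx
  refine ⟨(t - μ)⁻¹ • x, Submodule.smul_mem _ _ (Submodule.subset_span hx), ?_⟩
  simp [hAx, ← sub_smul, smul_smul, inv_mul_cancel₀ (sub_ne_zero.2 ht)]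

variable (F) in
/-- The span of the first `n` vectors `v 0, …, v (n - 1)` of a sequence. -/
def initialSpan (v : ℕ → V) (n : ℕ) : Submodule F V :=
  Submodule.span F (v '' {j : ℕ | j < n})

theorem mem_initialSpan {v : ℕ → V} {j n : ℕ} (h : j < n) : v j ∈ initialSpan F v n :=
  Submodule.subset_span ⟨j, h, rfl⟩

theorem initialSpan_le {v : ℕ → V} {n : ℕ} {W : Submodule F V} :
    initialSpan F v n ≤ W ↔ ∀ j < n, v j ∈ W := by
  simp [initialSpan, Submodule.span_le, Set.subset_def]

theorem initialSpan_mono {v : ℕ → V} {m n : ℕ} (h : m ≤ n) :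
    initialSpan F v m ≤ initialSpan F v n :=
  initialSpan_le.2 fun _ hj => mem_initialSpan (hj.trans_le h)

theorem finrank_initialSpan_le (v : ℕ → V) (n : ℕ) :
    Module.finrank F (initialSpan F v n) ≤ n := by
  have hrange : v '' {j : ℕ | j < n} = Set.range fun j : Fin n => v j := by
    ext x
    simp [Fin.exists_iff]
  rw [initialSpan, hrange]
  simpa [Set.finrank] using finrank_range_le_card (R := F) fun j : Fin n => v j

theorem initialSpan_update_of_le (v : ℕ → V) (x : V) {m n : ℕ} (h : m ≤ n) :
    initialSpan F (Function.update v n x) m = initialSpan F v m :=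
  congrArg (Submodule.span F) <| Set.image_congr fun _ hj =>
    Function.update_of_ne (lt_of_lt_of_le hj h).ne _ _

/-- A chain `v 0, …, v n` of `A`-eigenvectors with eigenvalues `θ 0, …, θ n` along which `B` acts
by `v i ↦ v (i + 1)`, up to the span of `v 0, …, v i`. The values of `v` beyond `n` are
irrelevant, and the `v i` are not required to be nonzero. -/
structure IsEigenvectorChain (A B : Module.End F V) (θ : ℕ → F) (v : ℕ → V) (n : ℕ) : Prop where
  apply_eq : ∀ i ≤ n, A (v i) = θ i • v i
  sub_mem : ∀ i < n, B (v i) - v (i + 1) ∈ initialSpan F v (i + 1)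

namespace IsEigenvectorChain

variable {A B : Module.End F V} {θ : ℕ → F} {v : ℕ → V} {n : ℕ}

theorem apply_mem (h : IsEigenvectorChain A B θ v n) {i m : ℕ} (hin : i < n) (him : i + 1 < m) :
    B (v i) ∈ initialSpan F v m := by
  rw [← sub_add_cancel (B (v i)) (v (i + 1))]
  exact add_mem (initialSpan_mono him.le (h.sub_mem i hin)) (mem_initialSpan him)

theorem initialSpan_mem_invtSubmodule (h : IsEigenvectorChain A B θ v n) {m : ℕ}
    (hm : m ≤ n + 1) : initialSpan F v m ∈ A.invtSubmodule :=
  initialSpan_le.2 fun j hj => by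
    rw [Submodule.mem_comap, h.apply_eq j (by lia)]
    exact Submodule.smul_mem _ _ (mem_initialSpan hj)

theorem initialSpan_le_comap (h : IsEigenvectorChain A B θ v n) {m : ℕ} (hm : m ≤ n) :
    initialSpan F v m ≤ (initialSpan F v (m + 1)).comap B :=
  initialSpan_le.2 fun j hj => h.apply_mem (hj.trans_le hm) (by lia)

theorem ne_zero (h : IsEigenvectorChain A B θ v n)
    (hirr : ∀ W : Submodule F V, v 0 ∈ W → W ∈ A.invtSubmodule → W ∈ B.invtSubmodule → W = ⊤)
    (hn : n < Module.finrank F V) {i : ℕ} (hi : i < n) : v (i + 1) ≠ 0 := by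
  intro hzero
  have hB : initialSpan F v (i + 1) ∈ B.invtSubmodule := by
    refine initialSpan_le.2 fun j hj => ?_
    rcases Nat.lt_succ_iff_lt_or_eq.1 hj with hlt | rfl
    · exact h.apply_mem (by lia) (by lia)
    · simpa [hzero] using h.sub_mem j hi
  have htop := hirr _ (mem_initialSpan i.succ_pos)
    (h.initialSpan_mem_invtSubmodule (by lia)) hB
  have hle := finrank_initialSpan_le (F := F) v (i + 1)
  rw [htop, finrank_top] at hle
  lia

theorem update (h : IsEigenvectorChain A B θ v n) {x : V} (hAx : A x = θ (n + 1) • x)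
    (hBx : B (v n) - x ∈ initialSpan F v (n + 1)) :
    IsEigenvectorChain A B θ (Function.update v (n + 1) x) (n + 1) where
  apply_eq i hi := by
    rcases hi.eq_or_lt with rfl | hlt
    · simpa using hAx
    · rw [Function.update_of_ne hlt.ne]
      exact h.apply_eq i (by lia)
  sub_mem i hi := by
    rw [initialSpan_update_of_le v x hi, Function.update_of_ne hi.ne]
    rcases (Nat.lt_succ_iff.1 hi).eq_or_lt with rfl | hlt
    · simpa using hBx
    · rw [Function.update_of_ne (by lia)]
      exact h.sub_mem i hlt

variable {β γs ρ γ ω ηs : F}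

-- Evaluate the Askey–Wilson relation at `v n` modulo the span: only `A (B (v (n + 1)))` and
-- multiples of `B (v (n + 1))` survive.
theorem sub_smul_mem (h : IsEigenvectorChain A B θ v (n + 1))
    (hAW : AskeyWilsonRel A B β γs ρ γ ω ηs) (hθ : θ n - β * θ (n + 1) + θ (n + 2) = γ) :
    A (B (v (n + 1))) - θ (n + 2) • B (v (n + 1)) ∈ initialSpan F v (n + 2) := by
  set W := initialSpan F v (n + 2)
  obtain ⟨w, hw, hBv⟩ : ∃ w ∈ initialSpan F v (n + 1), B (v n) = v (n + 1) + w :=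
    ⟨_, h.sub_mem n n.lt_succ_self, by abel⟩
  have hWA : W ∈ A.invtSubmodule := h.initialSpan_mem_invtSubmodule le_rfl
  have hBw : B w ∈ W := h.initialSpan_le_comap le_rfl hw
  have hBAw : B (A w) ∈ W :=
    h.initialSpan_le_comap le_rfl (h.initialSpan_mem_invtSubmodule (by lia) hw)
  have hwW : w ∈ W := initialSpan_mono (Nat.le_succ _) hw
  have hmod {x : V} (hx : x ∈ W) : W.mkQ x = 0 := (Submodule.Quotient.mk_eq_zero W).2 hx
  have hrel := congrArg W.mkQ (LinearMap.congr_fun hAW (v n))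
  simp only [LinearMap.sub_apply, LinearMap.add_apply, LinearMap.smul_apply, Module.End.mul_apply,
    Module.End.one_apply, h.apply_eq n (by lia), h.apply_eq (n + 1) le_rfl, hBv, map_sub, map_add,
    map_smul, hmod hBw, hmod hBAw, hmod (hWA hBw), hmod (hWA hwW), hmod hwW,
    hmod (mem_initialSpan (show n < n + 2 by lia)),
    hmod (mem_initialSpan (show n + 1 < n + 2 by lia))] at hrel
  rw [← Submodule.Quotient.mk_eq_zero, ← Submodule.mkQ_apply, map_sub, map_smul,
    show θ (n + 2) = γ - θ n + β * θ (n + 1) by linear_combination hθ]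
  linear_combination (norm := module) hrel

theorem exists_next (h : IsEigenvectorChain A B θ v (n + 1))
    (hAW : AskeyWilsonRel A B β γs ρ γ ω ηs) (hθ : θ n - β * θ (n + 1) + θ (n + 2) = γ)
    (hne : ∀ j < n + 2, θ j ≠ θ (n + 2)) :
    ∃ x, A x = θ (n + 2) • x ∧ B (v (n + 1)) - x ∈ initialSpan F v (n + 2) := by
  have heig : ∀ x ∈ v '' {j | j < n + 2}, ∃ t ≠ θ (n + 2), A x = t • x := by
    rintro _ ⟨j, hj, rfl⟩
    exact ⟨θ j, hne j hj, h.apply_eq j (Nat.lt_succ_iff.1 hj)⟩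
  obtain ⟨w, hw, hAw⟩ := span_le_map_sub_algebraMap heig (h.sub_smul_mem hAW hθ)
  refine ⟨B (v (n + 1)) - w, ?_, by rwa [sub_sub_cancel]⟩
  rw [LinearMap.sub_apply, Module.algebraMap_end_apply] at hAw
  rw [map_sub, smul_sub]
  linear_combination (norm := module) -hAw

end IsEigenvectorChain

theorem exists_isEigenvectorChain {A B : Module.End F V} {β γs ρ γ ω ηs : F}
    (hAW : AskeyWilsonRel A B β γs ρ γ ω ηs) {θ : ℕ → F} {d : ℕ} (hd : 1 ≤ d)
    (hinj : Set.InjOn θ (Set.Iic d))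
    (hrec : ∀ n, n + 2 ≤ d → θ n - β * θ (n + 1) + θ (n + 2) = γ)
    {v₀ v₁ : V} (hAv₀ : A v₀ = θ 0 • v₀) (hAv₁ : A v₁ = θ 1 • v₁)
    (hBv₀ : B v₀ - v₁ ∈ Submodule.span F {v₀}) :
    ∃ v : ℕ → V, v 0 = v₀ ∧ IsEigenvectorChain A B θ v d := by
  induction d, hd using Nat.le_induction with
  | base =>
    have hchain : IsEigenvectorChain A B θ (fun _ => v₀) 0 := ⟨by simpa using hAv₀, by simp⟩
    exact ⟨_, by simp, hchain.update hAv₁ (by simpa [initialSpan] using hBv₀)⟩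
  | succ n hn ih =>
    obtain ⟨v, hv₀, hv⟩ := ih (hinj.mono (Set.Iic_subset_Iic.2 n.le_succ))
      fun m hm => hrec m (by lia)
    obtain ⟨n, rfl⟩ := Nat.exists_eq_add_of_le' hn
    have hne (j : ℕ) (hj : j < n + 2) : θ j ≠ θ (n + 2) := fun heq =>
      hj.ne (hinj (Set.mem_Iic.2 hj.le) (Set.mem_Iic.2 le_rfl) heq)
    obtain ⟨x, hAx, hBx⟩ := hv.exists_next hAW (hrec n le_rfl) hne
    exact ⟨_, by simpa using hv₀, hv.update hAx hBx⟩

end Chain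

/-- The eigenvector-chain claim from the proof of the first main theorem: under the
hypotheses of that theorem, there is a chain of nonzero vectors `v 0 = v0, v 1, …, v d`
with `A (v i) = θ i • v i` and `As (v (i-1)) - v i ∈ span (v 0, …, v (i-1))` for
`1 ≤ i ≤ d`. -/
theorem eigenvector_chain
    (d : ℕ) (hd : 1 ≤ d) (hdim : Module.finrank F V = d + 1)
    (Es : Fin (d + 1) → Module.End F V) (hEs : MOISys d Es)
    (A : Module.End F V)
    (hAfar : ∀ i j : Fin (d + 1), ((i : ℕ) + 1 < (j : ℕ) ∨ (j : ℕ) + 1 < (i : ℕ)) →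
      Es i * A * Es j = 0)
    (hAnear : ∀ i j : Fin (d + 1), ((i : ℕ) + 1 = (j : ℕ) ∨ (j : ℕ) + 1 = (i : ℕ)) →
      Es i * A * Es j ≠ 0)
    (θs : ℤ → F) (As : Module.End F V)
    (hAs : As = ∑ i : Fin (d + 1), θs ((i : ℕ) : ℤ) • Es i)
    (θ : ℤ → F) (a : ℕ → F)
    (ha : ∀ i : Fin (d + 1), a i = LinearMap.trace F V (Es i * A))
    (h1 : ∀ i j : ℤ, 0 ≤ i → i ≤ d → 0 ≤ j → j ≤ d → i ≠ j → θ i ≠ θ j)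
    (h2 : ∀ i : ℤ, 1 ≤ i → i ≤ d → θs i ≠ θs 0)
    (β γs : F)
    (h3 : ∀ i : ℤ, 0 ≤ i → i ≤ d → γs = θs (i - 1) - β * θs i + θs (i + 1))
    (v0 v1 : V) (hv0 : v0 ≠ 0) (hv1 : v1 ≠ 0)
    (hAv0 : A v0 = θ 0 • v0) (hAv1 : A v1 = θ 1 • v1)
    (hAsv01 : ∃ t : F, As v0 - v1 = t • v0)
    (γ ω ηs : F)
    (h5 : ∀ i : ℕ, i ≤ d →
      a i * ((θs i - θs ((i : ℤ) - 1)) * (θs i - θs ((i : ℤ) + 1)))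
        = γ * θs i ^ 2 + ω * θs i + ηs)
    (h6 : ∀ i : ℤ, 1 ≤ i → i ≤ (d : ℤ) - 1 → θ (i - 1) - β * θ i + θ (i + 1) = γ) :
    ∃ v : ℕ → V, v 0 = v0 ∧
      ∀ i : ℕ, 1 ≤ i → i ≤ d →
        v i ≠ 0 ∧ A (v i) = θ (i : ℤ) • v i ∧
        As (v (i - 1)) - v i ∈ Submodule.span F (v '' {j : ℕ | j < i}) := by
  subst hAs
  have : FiniteDimensional F V := .of_finrank_eq_succ hdim
  have hE := hEs.completeOrthogonalIdempotents hdim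
  have hdiag (i : Fin (d + 1)) : Es i * A * Es i = a i • Es i := by
    rw [ha, mul_mul_self_eq_trace_smul (hEs.2 i)]
  obtain ⟨ρ, hAW⟩ := exists_askeyWilsonRel_of_tridiagonal hE hAfar hdiag h3 h5
  have hinj : Set.InjOn (fun i : ℕ => θ i) (Set.Iic d) := fun i hi j hj => by
    simp only [Set.mem_Iic] at hi hj
    exact fun h => by_contra fun hij => h1 i j (by lia) (by lia) (by lia) (by lia) (by lia) h
  have hrec (n : ℕ) (hn : n + 2 ≤ d) :
      θ n - β * θ (n + 1 : ℕ) + θ (n + 2 : ℕ) = γ := by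
    have h := h6 (n + 1) (by lia) (by lia)
    rwa [add_sub_cancel_right, add_assoc] at h
  have hspan : _ ∈ Submodule.span F {v0} :=
    Submodule.mem_span_singleton.2 (hAsv01.imp fun _ => Eq.symm)
  obtain ⟨v, hv_zero, hv⟩ := exists_isEigenvectorChain hAW hd hinj hrec hAv0 hAv1 hspan
  have hirr (W : Submodule F V) (hW : v 0 ∈ W) :=
    eq_top_of_invariant_of_eigenvector_mem hE hEs.2 hAfar hAnear
      (fun i hi => h2 i (mod_cast Fin.pos_iff_ne_zero.2 hi) (by omega)) hv0 hAv0 (hv_zero ▸ hW)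
  refine ⟨v, hv_zero, fun i hi hid => ?_⟩
  obtain ⟨i, rfl⟩ := Nat.exists_eq_add_of_le' hi
  exact ⟨hv.ne_zero hirr (by lia) hid, hv.apply_eq _ hid, hv.sub_mem i hid⟩

end LeonardPaper
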